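/- Let s ∈ (0, 1), n > 2s an integer, and let Ω ⊂ ℝⁿ be a nonempty bounded open set. Then there exists a constant C > 0 such that for every measurable function u : ℝⁿ → ℝ with u = 0 a.e. on ℝⁿ \ Ω, ∫_Ω |u(x)|² dx ≤ C ∫_{ℝⁿ}∫_{ℝⁿ} |u(x) − u(y)|² / |x − y|^{n+2s} dx dy, where both sides are Lebesgue integrals with values in [0, ∞]. -/

import Mathlib

open MeasureTheory ENNReal

/-!
Pick a ball `B` disjoint from `Ω`, and let `D` bound `dist x y` on `Ω × B`. For `x ∈ Ω`, keeping
only `y ∈ B` in the inner integral, where `u y = 0`, leaves at least `|u x|² * μ B / D ^ a`.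
Integrating over `x` gives the inequality with constant `D ^ a / μ B`.
-/

section Kernel

variable {X G : Type*} [MeasurableSpace X] {μ : Measure X} [AddGroup G] {Φ : G → ℝ≥0∞}
  {u : X → G} {Ω B : Set X} {κ : ℝ≥0∞}

lemma mul_measure_mul_le_lintegral_sub_mul {w : X → ℝ≥0∞} (hB : MeasurableSet B)
    (hw : ∀ y ∈ B, κ ≤ w y) (hu : ∀ᵐ y ∂μ.restrict B, u y = 0) (g : G) :
    κ * μ B * Φ g ≤ ∫⁻ y, Φ (g - u y) * w y ∂μ :=
  calc κ * μ B * Φ g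
      = ∫⁻ _ in B, Φ g * κ ∂μ := by rw [setLIntegral_const]; ring
    _ ≤ ∫⁻ y in B, Φ (g - u y) * w y ∂μ := by
        refine lintegral_mono_ae ?_
        filter_upwards [hu, ae_restrict_mem hB] with y huy hyB
        rw [huy, sub_zero]
        gcongr
        exact hw y hyB
    _ ≤ ∫⁻ y, Φ (g - u y) * w y ∂μ := setLIntegral_le_lintegral B _

theorem mul_measure_mul_lintegral_le_lintegral_lintegral_sub_mul {k : X → X → ℝ≥0∞}
    (hΦ : Φ 0 = 0) (hB : MeasurableSet B) (hΩB : Disjoint Ω B)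
    (hk : ∀ x ∈ Ω, ∀ y ∈ B, κ ≤ k x y) (hu : ∀ᵐ x ∂μ, x ∉ Ω → u x = 0) :
    κ * μ B * ∫⁻ x, Φ (u x) ∂μ ≤ ∫⁻ x, ∫⁻ y, Φ (u x - u y) * k x y ∂μ ∂μ := by
  have hu_B : ∀ᵐ y ∂μ.restrict B, u y = 0 := by
    filter_upwards [ae_restrict_of_ae hu, ae_restrict_mem hB] with y huy hyB
    exact huy (hΩB.notMem_of_mem_right hyB)
  refine (lintegral_const_mul_le _ _).trans (lintegral_mono_ae ?_)
  filter_upwards [hu] with x hux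
  by_cases hx : x ∈ Ω
  · exact mul_measure_mul_le_lintegral_sub_mul hB (hk x hx) hu_B (u x)
  · simp [hux hx, hΦ]

end Kernel

section Metric

variable {X F : Type*} [MetricSpace X] [MeasurableSpace X] {μ : Measure X}
  [SeminormedAddCommGroup F] {Ω B : Set X} {p a D : ℝ}

theorem mul_lintegral_norm_rpow_le_of_dist_le (hp : 0 < p) (ha : 0 ≤ a) (hB : MeasurableSet B)
    (hΩB : Disjoint Ω B) (hD : ∀ x ∈ Ω, ∀ y ∈ B, dist x y ≤ D) {u : X → F}
    (hu : ∀ᵐ x ∂μ, x ∉ Ω → u x = 0) :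
    ENNReal.ofReal (D ^ a)⁻¹ * μ B * ∫⁻ x, ENNReal.ofReal (‖u x‖ ^ p) ∂μ ≤
      ∫⁻ x, ∫⁻ y, ENNReal.ofReal (‖u x - u y‖ ^ p / dist x y ^ a) ∂μ ∂μ := by
  have kernel_le : ∀ x ∈ Ω, ∀ y ∈ B,
      ENNReal.ofReal (D ^ a)⁻¹ ≤ ENNReal.ofReal (dist x y ^ a)⁻¹ := by
    intro x hx y hy
    have hxy : 0 < dist x y := dist_pos.2 (hΩB.ne_of_mem hx hy)
    gcongr
    exact hD x hx y hy
  have density_eq (v : F) (x y : X) : ENNReal.ofReal (‖v‖ ^ p / dist x y ^ a) =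
      ENNReal.ofReal (‖v‖ ^ p) * ENNReal.ofReal (dist x y ^ a)⁻¹ := by
    rw [div_eq_mul_inv, ENNReal.ofReal_mul (by positivity)]
  simp only [density_eq]
  exact mul_measure_mul_lintegral_le_lintegral_lintegral_sub_mul
    (Φ := fun v : F ↦ ENNReal.ofReal (‖v‖ ^ p)) (by simp [hp.ne']) hB hΩB kernel_le hu

theorem stmt_6_general [OpensMeasurableSpace X] [μ.IsOpenPosMeasure] (hp : 0 < p) (ha : 0 ≤ a)
    (hΩb : Bornology.IsBounded Ω) (hΩd : ¬Dense Ω) :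
    ∃ C : ℝ, 0 < C ∧ ∀ u : X → F, (∀ᵐ x ∂μ, x ∉ Ω → u x = 0) →
      ∫⁻ x, ENNReal.ofReal (‖u x‖ ^ p) ∂μ ≤
        ENNReal.ofReal C *
          ∫⁻ x, ∫⁻ y, ENNReal.ofReal (‖u x - u y‖ ^ p / dist x y ^ a) ∂μ ∂μ := by
  obtain ⟨z, r, hr, hzr⟩ : ∃ z, ∃ r > 0, Disjoint Ω (Metric.ball z r) := by
    simpa [Metric.dense_iff, Set.not_nonempty_iff_eq_empty, Set.disjoint_iff_inter_eq_empty,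
      Set.inter_comm] using hΩd
  obtain ⟨D, hD_one, hD⟩ :=
    (Metric.isBounded_iff_exists_ge 1).1 (hΩb.union (Metric.isBounded_ball (x := z) (r := r)))
  have const_pos : 0 < ENNReal.ofReal (D ^ a)⁻¹ * μ (Metric.ball z r) :=
    ENNReal.mul_pos (ENNReal.ofReal_pos.2 (by positivity)).ne' (Metric.measure_ball_pos μ z hr).ne'
  -- `μ (ball z r)` may be infinite, hence the detour through a smaller real constant.
  obtain ⟨c, -, hc_pos, hc_lt⟩ := ENNReal.lt_iff_exists_real_btwn.1 const_pos
  refine ⟨c⁻¹, inv_pos.2 (ENNReal.ofReal_pos.1 hc_pos), fun u hu ↦ ?_⟩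
  rw [ENNReal.ofReal_inv_of_pos (ENNReal.ofReal_pos.1 hc_pos),
    ← ENNReal.mul_le_iff_le_inv hc_pos.ne' ENNReal.ofReal_ne_top]
  refine (mul_le_mul_left hc_lt.le _).trans
    (mul_lintegral_norm_rpow_le_of_dist_le hp ha measurableSet_ball hzr ?_ hu)
  exact fun x hx y hy ↦ hD (.inl hx) (.inr hy)

end Metric

lemma not_dense_of_isBounded {E : Type*} [NormedAddCommGroup E] [NormedSpace ℝ E] [Nontrivial E]
    {Ω : Set E} (hΩ : Bornology.IsBounded Ω) : ¬Dense Ω := fun h ↦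
  NormedSpace.unbounded_univ ℝ E (h.closure_eq ▸ hΩ.closure)

/-- **Fractional Poincaré-type inequality** for functions vanishing outside a
bounded open set. -/
theorem stmt_6 (n : ℕ) (s : ℝ) (hs : 0 < s) (hs1 : s < 1) (hns : 2 * s < (n : ℝ))
    (Ω : Set (EuclideanSpace ℝ (Fin n))) (hΩo : IsOpen Ω)
    (hΩb : Bornology.IsBounded Ω) (hΩne : Ω.Nonempty) :
    ∃ C : ℝ, 0 < C ∧ ∀ u : EuclideanSpace ℝ (Fin n) → ℝ, Measurable u →
      (∀ᵐ x, x ∉ Ω → u x = 0) →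
      (∫⁻ x in Ω, ENNReal.ofReal (|u x| ^ 2)) ≤
        ENNReal.ofReal C *
          ∫⁻ x, ∫⁻ y, ENNReal.ofReal (|u x - u y| ^ 2 / dist x y ^ ((n : ℝ) + 2 * s)) := by
  have : NeZero n := NeZero.of_pos (by exact_mod_cast (by linarith : (0 : ℝ) < n))
  obtain ⟨C, hC, hle⟩ := stmt_6_general (μ := volume) (F := ℝ) (a := n + 2 * s) two_pos
    (by positivity) hΩb (not_dense_of_isBounded hΩb)
  simp only [Real.rpow_two, Real.norm_eq_abs] at hle
  exact ⟨C, hC, fun u _ hu ↦ (setLIntegral_le_lintegral Ω _).trans (hle u hu)⟩
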